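/- (Addition-deletion theorem for r(A).) Let ℓ ≥ 2, let A be an essential hyperplane arrangement in K^ℓ, let H ∈ A, and suppose A' = A \ {H} is also essential and nonempty. Let r = r(A), r' = r(A') and r'' = r(A^H), where A^H is the restricted arrangement in H ≅ K^{ℓ-1}. If r' < r'', then r = r' + 1. -/

import Mathlib

/-!
A homogeneous `θ ∈ D(A)` of degree below `r(A)` is a multiple of `θ_E`, because subtracting
`θ(Q) / (|A| Q) • θ_E` from it gives an element of `D_0(A)`. If `θ' ∈ D_0(A')` is nonzero of degree
`r'`, then `α_H θ' ∈ D(A)` is not a multiple of `θ_E`, so `r ≤ r' + 1`.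

For `r' < r`, suppose that `0 ≠ θ ∈ D_0(A)` has degree `r ≤ r' < r''`. As `θ` preserves `(α_H)`, it
restricts to a derivation in `D(A^H)`, which is a multiple of the Euler derivation of `H` since
`r < r''`. Lifting the multiplier gives `θ = g θ_E + α_H φ` with `φ ∈ D(A')` of degree
`r - 1 < r'`. So `φ`, and with it `θ`, is a multiple of `θ_E`, contradicting `θ(Q) = 0`.
-/

open Classical MvPolynomial

variable {K : Type*} [Field K] [CharZero K] {ℓ : ℕ}

/-- A (central) hyperplane arrangement: a finite set of nonzero linear forms,
pairwise non-proportional. -/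
def IsArrangement (A : Finset (MvPolynomial (Fin ℓ) K)) : Prop :=
  (∀ α ∈ A, α ≠ 0 ∧ α.IsHomogeneous 1) ∧
    ∀ α ∈ A, ∀ β ∈ A, α ≠ β → ∀ c : K, α ≠ c • β

/-- The arrangement is essential: the common zero set of its forms is `{0}`. -/
def IsEssential (A : Finset (MvPolynomial (Fin ℓ) K)) : Prop :=
  ∀ v : Fin ℓ → K, (∀ α ∈ A, eval v α = 0) → v = 0

/-- The defining polynomial `Q(A)`. -/
noncomputable def Qpoly (A : Finset (MvPolynomial (Fin ℓ) K)) : MvPolynomial (Fin ℓ) K :=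
  ∏ α ∈ A, α

/-- Apply a derivation `θ = Σ θ_j ∂_j` to a polynomial. -/
noncomputable def applyDer (θ : Fin ℓ → MvPolynomial (Fin ℓ) K)
    (f : MvPolynomial (Fin ℓ) K) : MvPolynomial (Fin ℓ) K :=
  ∑ j, θ j * pderiv j f

/-- The minimal degree of a Jacobian relation `r(A)`. -/
noncomputable def mdr (A : Finset (MvPolynomial (Fin ℓ) K)) : ℕ :=
  sInf {r | ∃ θ : Fin ℓ → MvPolynomial (Fin ℓ) K, θ ≠ 0 ∧
    (∀ j, (θ j).IsHomogeneous r) ∧ applyDer θ (Qpoly A) = 0}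

/-- The number of elements `|A^H|` of the restriction of `A` to `H`:
the number of distinct subspaces `H ∩ ker α_L`, `L ∈ A \ {H}`. -/
noncomputable def restCard (A : Finset (MvPolynomial (Fin ℓ) K))
    (H : MvPolynomial (Fin ℓ) K) : ℕ :=
  ((A.erase H).image fun L => {v : Fin ℓ → K | eval v H = 0 ∧ eval v L = 0}).card

/-- `B` is a realization (in `ℓ - 1` variables) of the restricted arrangement `A^H`:
there is an injective linear parametrization `e` of the hyperplane `H = ker α_H`
such that the zero sets of the forms of `B` correspond exactly to the traces
`H ∩ ker α_L`, `L ∈ A \ {H}`, of the other hyperplanes of `A` on `H`. -/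
def IsRestrictionOf (A : Finset (MvPolynomial (Fin ℓ) K)) (H : MvPolynomial (Fin ℓ) K)
    (B : Finset (MvPolynomial (Fin (ℓ - 1)) K)) : Prop :=
  IsArrangement B ∧
  ∃ e : (Fin (ℓ - 1) → K) →ₗ[K] (Fin ℓ → K),
    Function.Injective e ∧ (∀ w, eval (e w) H = 0) ∧
    (B.image fun β => {w : Fin (ℓ - 1) → K | eval w β = 0}) =
      ((A.erase H).image fun L => {w : Fin (ℓ - 1) → K | eval (e w) L = 0})

section HomogeneousPolynomials

variable {σ R k : Type*}

lemma homogeneousComponent_mul_of_isHomogeneous_left [CommSemiring R] {f : MvPolynomial σ R}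
    {m : ℕ} (hf : f.IsHomogeneous m) (d : ℕ) (g : MvPolynomial σ R) :
    homogeneousComponent d (f * g) =
      if m ≤ d then f * homogeneousComponent (d - m) g else 0 := by
  let _ : GradedAlgebra (homogeneousSubmodule σ R) := gradedAlgebra
  have hdecompose (i : ℕ) (p : MvPolynomial σ R) :
      (DirectSum.decompose (homogeneousSubmodule σ R) p i : MvPolynomial σ R) =
        homogeneousComponent i p :=
    decomposition.decompose'_apply p i
  simpa only [hdecompose] using
    DirectSum.coe_decompose_mul_of_left_mem (homogeneousSubmodule σ R) d hf

lemma exists_dual_eq_eval [CommSemiring R] {α : MvPolynomial σ R} (hα : α.IsHomogeneous 1) :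
    ∃ f : Module.Dual R (σ → R), ∀ v, f v = eval v α := by
  rw [← mem_homogeneousSubmodule, homogeneousSubmodule_one_eq_span_X] at hα
  induction hα using Submodule.span_induction with
  | mem x hx =>
    obtain ⟨i, rfl⟩ := hx
    exact ⟨LinearMap.proj i, fun v => by simp⟩
  | zero => exact ⟨0, fun v => by simp⟩
  | add x y _ _ hx hy =>
    obtain ⟨⟨f, hf⟩, g, hg⟩ := And.intro hx hy
    exact ⟨f + g, fun v => by simp [hf, hg]⟩
  | smul c x _ hx =>
    obtain ⟨f, hf⟩ := hx
    exact ⟨c • f, fun v => by simp [hf]⟩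

variable [Field k] {α β : MvPolynomial σ k}

lemma prime_of_isHomogeneous_one (hα : α.IsHomogeneous 1) (hα0 : α ≠ 0) : Prime α := by
  refine (irreducible_of_totalDegree_eq_one (hα.totalDegree hα0) fun c hc => ?_).prime
  refine isUnit_iff_ne_zero.2 fun hc0 => hα0 (MvPolynomial.ext _ _ fun i => ?_)
  simpa only [hc0, zero_dvd_iff, coeff_zero] using hc i

variable [Infinite k]

lemma exists_eq_smul_of_eval_eq_zero_imp (hα : α.IsHomogeneous 1) (hβ : β.IsHomogeneous 1)
    (h : ∀ v, eval v α = 0 → eval v β = 0) : ∃ c : k, β = c • α := by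
  obtain ⟨f, hf⟩ := exists_dual_eq_eval hα
  obtain ⟨g, hg⟩ := exists_dual_eq_eval hβ
  have hg_mem : g ∈ Submodule.span k (Set.range fun _ : Unit => f) :=
    mem_span_of_iInf_ker_le_ker fun v hv => by simp_all
  obtain ⟨c, rfl⟩ : ∃ c : k, c • f = g := by
    simpa only [Set.range_const, Submodule.mem_span_singleton] using hg_mem
  exact ⟨c, MvPolynomial.funext fun v => by simp [← hf, ← hg]⟩

lemma exists_eq_smul_of_dvd (hα : α.IsHomogeneous 1) (hβ : β.IsHomogeneous 1) (h : α ∣ β) :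
    ∃ c : k, β = c • α := by
  obtain ⟨γ, hγ⟩ := h
  exact exists_eq_smul_of_eval_eq_zero_imp hα hβ fun v hv => by rw [hγ, map_mul, hv, zero_mul]

end HomogeneousPolynomials

section Derivations

variable {k : Type*} [Field k] {n : ℕ}

lemma applyDer_eq_mkDerivation (θ : Fin n → MvPolynomial (Fin n) k) (f : MvPolynomial (Fin n) k) :
    applyDer θ f = mkDerivation k θ f := by
  have hsum (g : MvPolynomial (Fin n) k) : (∑ j, θ j • pderiv j : Derivation k _ _) g =
      applyDer θ g := by
    rw [← Derivation.coeFnAddMonoidHom_apply, map_sum, Finset.sum_apply]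
    rfl
  have hX : mkDerivation k θ = ∑ j, θ j • pderiv j := derivation_ext fun i => by
    simp [hsum, applyDer, mkDerivation_X, pderiv_X, Pi.single_apply]
  rw [hX, hsum]

lemma applyDer_X (θ : Fin n → MvPolynomial (Fin n) k) (i : Fin n) : applyDer θ (X i) = θ i := by
  rw [applyDer_eq_mkDerivation, mkDerivation_X]

lemma applyDer_derivation_X (D : Derivation k (MvPolynomial (Fin n) k) (MvPolynomial (Fin n) k))
    (f : MvPolynomial (Fin n) k) : applyDer (fun j => D (X j)) f = D f := by
  rw [applyDer_eq_mkDerivation]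
  exact DFunLike.congr_fun (derivation_ext fun i => mkDerivation_X k _ i) f

lemma applyDer_mul (θ : Fin n → MvPolynomial (Fin n) k) (f g : MvPolynomial (Fin n) k) :
    applyDer θ (f * g) = f * applyDer θ g + g * applyDer θ f := by
  simp only [applyDer_eq_mkDerivation, Derivation.leibniz, smul_eq_mul]

lemma applyDer_const_smul (θ : Fin n → MvPolynomial (Fin n) k) (c : k)
    (f : MvPolynomial (Fin n) k) : applyDer θ (c • f) = c • applyDer θ f := by
  simp only [applyDer_eq_mkDerivation, Derivation.map_smul]

lemma applyDer_add_left (θ φ : Fin n → MvPolynomial (Fin n) k) (f : MvPolynomial (Fin n) k) :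
    applyDer (θ + φ) f = applyDer θ f + applyDer φ f := by
  simp only [applyDer, Pi.add_apply, add_mul, Finset.sum_add_distrib]

lemma applyDer_sub_left (θ φ : Fin n → MvPolynomial (Fin n) k) (f : MvPolynomial (Fin n) k) :
    applyDer (θ - φ) f = applyDer θ f - applyDer φ f := by
  simp only [applyDer, Pi.sub_apply, sub_mul, Finset.sum_sub_distrib]

lemma applyDer_smul_left (g : MvPolynomial (Fin n) k) (θ : Fin n → MvPolynomial (Fin n) k)
    (f : MvPolynomial (Fin n) k) : applyDer (g • θ) f = g * applyDer θ f := by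
  simp only [applyDer, Pi.smul_apply, smul_eq_mul, mul_assoc, Finset.mul_sum]

lemma isHomogeneous_applyDer {θ : Fin n → MvPolynomial (Fin n) k} {f : MvPolynomial (Fin n) k}
    {d m : ℕ} (hθ : ∀ j, (θ j).IsHomogeneous d) (hf : f.IsHomogeneous m) :
    (applyDer θ f).IsHomogeneous (d + (m - 1)) :=
  IsHomogeneous.sum _ _ _ fun j _ => (hθ j).mul hf.pderiv

lemma applyDer_homogeneousComponent (θ : Fin n → MvPolynomial (Fin n) k) (d : ℕ)
    {f : MvPolynomial (Fin n) k} {m : ℕ} (hf : f.IsHomogeneous m) :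
    applyDer (fun j => homogeneousComponent d (θ j)) f =
      homogeneousComponent (d + (m - 1)) (applyDer θ f) := by
  simp only [applyDer, map_sum]
  refine Finset.sum_congr rfl fun j _ => ?_
  rw [mul_comm (θ j), homogeneousComponent_mul_of_isHomogeneous_left hf.pderiv,
    if_pos (Nat.le_add_left _ _), Nat.add_sub_cancel, mul_comm]

lemma Qpoly_dvd_applyDer_Qpoly {A : Finset (MvPolynomial (Fin n) k)}
    {θ : Fin n → MvPolynomial (Fin n) k} (hθ : ∀ α ∈ A, α ∣ applyDer θ α) :
    Qpoly A ∣ applyDer θ (Qpoly A) := by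
  unfold Qpoly
  induction A using Finset.induction_on with
  | empty => simp
  | insert α s hα ih =>
    simp only [Finset.forall_mem_insert] at hθ
    rw [Finset.prod_insert hα, applyDer_mul]
    exact dvd_add (mul_dvd_mul_left α (ih hθ.2))
      (mul_comm α (∏ β ∈ s, β) ▸ mul_dvd_mul_left _ hθ.1)

/-- The Euler derivation `θ_E = ∑ x_i ∂_i`, given by its coefficients; its multiples are the
derivations that are logarithmic along every arrangement. -/
noncomputable def eulerDer (k : Type*) [Field k] (n : ℕ) : Fin n → MvPolynomial (Fin n) k := X

lemma applyDer_eulerDer {f : MvPolynomial (Fin n) k} {d : ℕ} (hf : f.IsHomogeneous d) :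
    applyDer (eulerDer k n) f = d • f :=
  hf.sum_X_mul_pderiv

lemma exists_homogeneousComponent_smul_eulerDer (d : ℕ) (g : MvPolynomial (Fin n) k) :
    ∃ g' : MvPolynomial (Fin n) k,
      (fun j => homogeneousComponent d ((g • eulerDer k n) j)) = g' • eulerDer k n := by
  refine ⟨if 1 ≤ d then homogeneousComponent (d - 1) g else 0, funext fun j => ?_⟩
  simp only [eulerDer, Pi.smul_apply, smul_eq_mul]
  rw [mul_comm g, homogeneousComponent_mul_of_isHomogeneous_left (isHomogeneous_X _ _), ite_mul,
    zero_mul, mul_comm (X j)]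

lemma exists_isHomogeneous_eq_smul_eulerDer_add_smul {θ φ : Fin n → MvPolynomial (Fin n) k}
    {α g : MvPolynomial (Fin n) k} {d : ℕ} (hα : α.IsHomogeneous 1) (hθ0 : θ ≠ 0)
    (hθ : ∀ j, (θ j).IsHomogeneous d) (h : θ = g • eulerDer k n + α • φ) :
    ∃ (e : ℕ) (g' : MvPolynomial (Fin n) k) (φ' : Fin n → MvPolynomial (Fin n) k), d = e + 1 ∧
      (∀ j, (φ' j).IsHomogeneous e) ∧ θ = g' • eulerDer k n + α • φ' := by
  have hcomp (j : Fin n) : θ j =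
      homogeneousComponent d (X j * g) + homogeneousComponent d (α * φ j) := by
    rw [← map_add, ← homogeneousComponent_of_mem (hθ j) |>.trans (if_pos rfl), h]
    simp [eulerDer, mul_comm]
  simp only [homogeneousComponent_mul_of_isHomogeneous_left (isHomogeneous_X k _),
    homogeneousComponent_mul_of_isHomogeneous_left hα] at hcomp
  cases d with
  | zero => exact absurd (funext fun j => by simpa using hcomp j) hθ0
  | succ e =>
    refine ⟨e, homogeneousComponent e g, fun j => homogeneousComponent e (φ j), rfl,
      fun j => homogeneousComponent_isHomogeneous _ _, funext fun j => ?_⟩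
    simpa [eulerDer, mul_comm] using hcomp j

end Derivations

section LogarithmicDerivations

variable {k : Type*} [Field k] {n : ℕ} {A : Finset (MvPolynomial (Fin n) k)}
  {α β : MvPolynomial (Fin n) k} {θ : Fin n → MvPolynomial (Fin n) k}

/-- The module `D(A)` of logarithmic derivations: those with `θ(α_H) ∈ (α_H)` for all `H ∈ A`.
It contains `D_0(A)`, but unlike `D_0(A)` it behaves well under deletion and restriction. -/
noncomputable def logDer (A : Finset (MvPolynomial (Fin n) k)) :
    Submodule (MvPolynomial (Fin n) k) (Fin n → MvPolynomial (Fin n) k) where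
  carrier := {θ | ∀ α ∈ A, α ∣ applyDer θ α}
  add_mem' hθ hφ α hα := by
    rw [applyDer_add_left]
    exact dvd_add (hθ α hα) (hφ α hα)
  zero_mem' α _ := by simp [applyDer]
  smul_mem' g θ hθ α hα := by
    rw [applyDer_smul_left]
    exact (hθ α hα).mul_left g

lemma Qpoly_eq_mul_Qpoly_erase (hα : α ∈ A) : Qpoly A = α * Qpoly (A.erase α) :=
  (Finset.mul_prod_erase A id hα).symm

lemma logDer_anti {A' : Finset (MvPolynomial (Fin n) k)} (h : A' ⊆ A) : logDer A ≤ logDer A' :=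
  fun _ hθ α hα => hθ α (h hα)

lemma smul_mem_logDer (hθ : θ ∈ logDer (A.erase α)) : α • θ ∈ logDer A :=
  fun β hβ => by
    rw [applyDer_smul_left]
    by_cases hβα : β = α
    · exact hβα ▸ dvd_mul_right _ _
    · exact (hθ β (Finset.mem_erase.2 ⟨hβα, hβ⟩)).mul_left α

namespace IsArrangement

lemma erase (hA : IsArrangement A) (α : MvPolynomial (Fin n) k) : IsArrangement (A.erase α) :=
  ⟨fun β hβ => hA.1 β (Finset.mem_of_mem_erase hβ), fun β hβ γ hγ =>
    hA.2 β (Finset.mem_of_mem_erase hβ) γ (Finset.mem_of_mem_erase hγ)⟩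

lemma prime (hA : IsArrangement A) (hα : α ∈ A) : Prime α :=
  prime_of_isHomogeneous_one (hA.1 α hα).2 (hA.1 α hα).1

lemma isHomogeneous_Qpoly (hA : IsArrangement A) : (Qpoly A).IsHomogeneous A.card := by
  simpa [Qpoly] using IsHomogeneous.prod A id (fun _ => 1) fun α hα => (hA.1 α hα).2

lemma Qpoly_ne_zero (hA : IsArrangement A) : Qpoly A ≠ 0 :=
  Finset.prod_ne_zero_iff.2 fun α hα => (hA.1 α hα).1

lemma eulerDer_mem_logDer (hA : IsArrangement A) : eulerDer k n ∈ logDer A := fun α hα => by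
  rw [applyDer_eulerDer (hA.1 α hα).2, one_smul]

lemma not_dvd [Infinite k] (hA : IsArrangement A) (hα : α ∈ A) (hβ : β ∈ A) (hne : α ≠ β) :
    ¬α ∣ β := fun h => by
  obtain ⟨c, hc⟩ := exists_eq_smul_of_dvd (hA.1 α hα).2 (hA.1 β hβ).2 h
  exact hA.2 β hβ α hα hne.symm c hc

lemma mem_logDer_of_applyDer_Qpoly_eq_zero [Infinite k] (hA : IsArrangement A)
    (hθ : applyDer θ (Qpoly A) = 0) : θ ∈ logDer A := fun α hα => by
  rw [Qpoly_eq_mul_Qpoly_erase hα, applyDer_mul] at hθ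
  have hdvd : α ∣ Qpoly (A.erase α) * applyDer θ α :=
    (dvd_add_right (dvd_mul_right α _)).1 (hθ ▸ dvd_zero α)
  refine ((hA.prime hα).dvd_or_dvd hdvd).resolve_left fun hQ => ?_
  obtain ⟨β, hβ, hαβ⟩ := (Prime.dvd_finsetProd_iff (hA.prime hα) _).1 hQ
  exact hA.not_dvd hα (Finset.mem_of_mem_erase hβ) (Finset.ne_of_mem_erase hβ).symm hαβ

lemma mem_logDer_erase_of_smul_mem [Infinite k] (hA : IsArrangement A) (hα : α ∈ A)
    (hθ : α • θ ∈ logDer (A.erase α)) : θ ∈ logDer (A.erase α) := fun β hβ => by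
  have hβA := Finset.mem_of_mem_erase hβ
  have hdvd : β ∣ α * applyDer θ β := applyDer_smul_left α θ β ▸ hθ β hβ
  exact ((hA.prime hβA).dvd_or_dvd hdvd).resolve_left
    (hA.not_dvd hβA hα (Finset.ne_of_mem_erase hβ))

lemma eq_zero_of_eq_smul_eulerDer [CharZero k] (hA : IsArrangement A) (hne : A.Nonempty)
    (hθ : applyDer θ (Qpoly A) = 0) {g : MvPolynomial (Fin n) k} (h : θ = g • eulerDer k n) :
    θ = 0 := by
  rw [h, applyDer_smul_left, applyDer_eulerDer hA.isHomogeneous_Qpoly] at hθ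
  have hg : g = 0 := by simpa [hne.ne_empty, hA.Qpoly_ne_zero] using hθ
  rw [h, hg, zero_smul]

end IsArrangement

end LogarithmicDerivations

section MinimalDegree

variable {k : Type*} [Field k] {n : ℕ} {A : Finset (MvPolynomial (Fin n) k)}
  {α : MvPolynomial (Fin n) k} {θ : Fin n → MvPolynomial (Fin n) k} {d : ℕ}

lemma eq_zero_of_lt_mdr (hd : d < mdr A) (hθ : ∀ j, (θ j).IsHomogeneous d)
    (hQ : applyDer θ (Qpoly A) = 0) : θ = 0 := by
  by_contra hθ0
  exact Nat.notMem_of_lt_sInf hd ⟨θ, hθ0, hθ, hQ⟩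

lemma pos_of_mdr_pos (h : 0 < mdr A) : 0 < n := by
  obtain ⟨-, θ, hθ, -⟩ := Nat.nonempty_of_pos_sInf h
  obtain ⟨j, -⟩ := Function.ne_iff.1 hθ
  exact j.pos

lemma nonempty_of_mdr_pos (h : 0 < mdr A) : A.Nonempty := by
  by_contra hA
  rw [Finset.not_nonempty_iff_eq_empty] at hA
  have hone : (1 : Fin n → MvPolynomial (Fin n) k) = 0 :=
    eq_zero_of_lt_mdr h (fun _ => isHomogeneous_one _ _) (by simp [hA, Qpoly, applyDer])
  exact one_ne_zero (congrFun hone ⟨0, pos_of_mdr_pos h⟩)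

lemma exists_ne_zero_applyDer_eq_zero (hn : 2 ≤ n) (f : MvPolynomial (Fin n) k) :
    ∃ θ : Fin n → MvPolynomial (Fin n) k, θ ≠ 0 ∧ applyDer θ f = 0 := by
  have hdep : ¬LinearIndependent (MvPolynomial (Fin n) k) fun j => pderiv j f := fun hind => by
    have hcard := hind.fintype_card_le_finrank
    rw [Fintype.card_fin, Module.finrank_self] at hcard
    omega
  obtain ⟨θ, hθ, j, hj⟩ := Fintype.not_linearIndependent_iff.1 hdep
  exact ⟨θ, Function.ne_iff.2 ⟨j, hj⟩, hθ⟩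

namespace IsArrangement

lemma exists_applyDer_Qpoly_eq_zero_of_mdr (hA : IsArrangement A) (hn : 2 ≤ n) :
    ∃ θ : Fin n → MvPolynomial (Fin n) k, θ ≠ 0 ∧ (∀ j, (θ j).IsHomogeneous (mdr A)) ∧
      applyDer θ (Qpoly A) = 0 := by
  obtain ⟨θ, hθ0, hθ⟩ := exists_ne_zero_applyDer_eq_zero hn (Qpoly A)
  obtain ⟨j, hj⟩ := Function.ne_iff.1 hθ0
  obtain ⟨d, hd⟩ : ∃ d, homogeneousComponent d (θ j) ≠ 0 := by
    by_contra! hzero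
    exact hj (by rw [← sum_homogeneousComponent (θ j)]; simp [hzero])
  refine Nat.sInf_mem (s := {r | ∃ θ : Fin n → MvPolynomial (Fin n) k, θ ≠ 0 ∧
    (∀ j, (θ j).IsHomogeneous r) ∧ applyDer θ (Qpoly A) = 0})
    ⟨d, fun i => homogeneousComponent d (θ i), Function.ne_iff.2 ⟨j, hd⟩,
      fun i => homogeneousComponent_isHomogeneous _ _, ?_⟩
  rw [applyDer_homogeneousComponent θ d hA.isHomogeneous_Qpoly, hθ, map_zero]

lemma exists_eq_smul_eulerDer_of_lt_mdr [CharZero k] (hA : IsArrangement A) (hd : d < mdr A)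
    (hθ : ∀ j, (θ j).IsHomogeneous d) (hlog : θ ∈ logDer A) :
    ∃ g : MvPolynomial (Fin n) k, θ = g • eulerDer k n := by
  have hcard : (A.card : k) ≠ 0 := by
    exact_mod_cast (nonempty_of_mdr_pos (Nat.zero_lt_of_lt hd)).card_pos.ne'
  obtain ⟨g, hg⟩ := Qpoly_dvd_applyDer_Qpoly hlog
  let ψ := θ - ((A.card : k)⁻¹ • g) • eulerDer k n
  have hψ : applyDer ψ (Qpoly A) = 0 := by
    rw [applyDer_sub_left, applyDer_smul_left, applyDer_eulerDer hA.isHomogeneous_Qpoly, hg,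
      smul_mul_assoc, mul_smul_comm, ← Nat.cast_smul_eq_nsmul k, inv_smul_smul₀ hcard, mul_comm,
      sub_self]
  have hψd : (fun j => homogeneousComponent d (ψ j)) = 0 :=
    eq_zero_of_lt_mdr hd (fun j => homogeneousComponent_isHomogeneous _ _) (by
      rw [applyDer_homogeneousComponent ψ d hA.isHomogeneous_Qpoly, hψ, map_zero])
  obtain ⟨g', hg'⟩ := exists_homogeneousComponent_smul_eulerDer d ((A.card : k)⁻¹ • g)
  refine ⟨g', hg' ▸ funext fun j => ?_⟩
  have hj : homogeneousComponent d (θ j - (((A.card : k)⁻¹ • g) • eulerDer k n) j) = 0 :=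
    congrFun hψd j
  rwa [map_sub, homogeneousComponent_of_mem (hθ j), if_pos rfl, sub_eq_zero] at hj

lemma mdr_le_mdr_erase_add_one [CharZero k] (hA : IsArrangement A) (hn : 2 ≤ n) (hα : α ∈ A)
    (hne : (A.erase α).Nonempty) : mdr A ≤ mdr (A.erase α) + 1 := by
  by_contra! hlt
  have hA' := hA.erase α
  obtain ⟨θ, hθ0, hθ, hQ⟩ := hA'.exists_applyDer_Qpoly_eq_zero_of_mdr hn
  obtain ⟨g, hg⟩ := hA.exists_eq_smul_eulerDer_of_lt_mdr hlt
    (fun j => add_comm 1 (mdr (A.erase α)) ▸ (hA.1 α hα).2.mul (hθ j))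
    (smul_mem_logDer (hA'.mem_logDer_of_applyDer_Qpoly_eq_zero hQ))
  obtain ⟨β, hβ⟩ := hne
  have hβA := Finset.mem_of_mem_erase hβ
  have hgβ : α * applyDer θ β = g * β := by
    rw [← applyDer_smul_left, show α • θ = g • eulerDer k n from hg, applyDer_smul_left,
      applyDer_eulerDer (hA.1 β hβA).2, one_smul]
  obtain ⟨g', rfl⟩ : α ∣ g := ((hA.prime hα).dvd_or_dvd (Dvd.intro _ hgβ)).resolve_right
    (hA.not_dvd hα hβA (Finset.ne_of_mem_erase hβ).symm)
  refine hθ0 (hA'.eq_zero_of_eq_smul_eulerDer ⟨β, hβ⟩ hQ (g := g') ?_)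
  exact smul_right_injective _ (hA.1 α hα).1 (hg.trans (mul_smul _ _ _))

end IsArrangement

end MinimalDegree

section LinearPullback

variable {R k : Type*} [CommSemiring R] [Field k] {m n : ℕ}

/-- Composition of polynomial functions with a linear map `e : R ^ m → R ^ n`, realized as the
substitution of the coordinate forms of `e` for the variables. -/
noncomputable def linearPullback (e : (Fin m → R) →ₗ[R] (Fin n → R)) :
    MvPolynomial (Fin n) R →ₐ[R] MvPolynomial (Fin m) R :=
  aeval (LinearMap.toMatrix' e).toMvPolynomial

lemma isHomogeneous_linearPullback (e : (Fin m → R) →ₗ[R] (Fin n → R))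
    {f : MvPolynomial (Fin n) R} {d : ℕ} (hf : f.IsHomogeneous d) :
    (linearPullback e f).IsHomogeneous d := by
  simpa only [linearPullback, one_mul] using
    hf.aeval _ (Matrix.toMvPolynomial_isHomogeneous (LinearMap.toMatrix' e))

lemma eval_linearPullback (e : (Fin m → R) →ₗ[R] (Fin n → R)) (f : MvPolynomial (Fin n) R)
    (w : Fin m → R) : eval w (linearPullback e f) = eval (e w) f := by
  induction f using MvPolynomial.induction_on with
  | C c => simp [linearPullback]
  | add p q hp hq => simp only [map_add, hp, hq]
  | mul_X p i hp =>
    have hX : eval w (linearPullback e (X i)) = e w i := by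
      simp [linearPullback, Matrix.toMvPolynomial_eval_eq_apply, LinearMap.toMatrix'_mulVec]
    simp only [map_mul, hp, hX, eval_X]

variable [Infinite k] {e : (Fin m → k) →ₗ[k] (Fin n → k)}

lemma linearPullback_linearPullback {p : (Fin n → k) →ₗ[k] (Fin m → k)}
    (hp : Function.LeftInverse p e) (f : MvPolynomial (Fin m) k) :
    linearPullback e (linearPullback p f) = f :=
  MvPolynomial.funext fun w => by rw [eval_linearPullback, eval_linearPullback, hp w]

lemma dvd_sub_linearPullback_linearPullback {p : (Fin n → k) →ₗ[k] (Fin m → k)}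
    (hp : Function.LeftInverse p e) {α : MvPolynomial (Fin n) k} (hα : α.IsHomogeneous 1)
    (hrange : ∀ v, eval v α = 0 → v ∈ Set.range e) (f : MvPolynomial (Fin n) k) :
    α ∣ f - linearPullback p (linearPullback e f) := by
  have hX (i : Fin n) : α ∣ X i - linearPullback p (linearPullback e (X i)) := by
    obtain ⟨c, hc⟩ := exists_eq_smul_of_eval_eq_zero_imp hα
      ((isHomogeneous_X k i).sub (isHomogeneous_linearPullback p
        (isHomogeneous_linearPullback e (isHomogeneous_X k i)))) fun v hv => by
          obtain ⟨w, rfl⟩ := hrange v hv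
          rw [map_sub, eval_linearPullback, eval_linearPullback, hp w, sub_self]
    exact hc ▸ smul_eq_C_mul α c ▸ dvd_mul_left α (C c)
  induction f using MvPolynomial.induction_on with
  | C c => simp [linearPullback]
  | add f g hf hg =>
    simpa only [map_add, add_sub_add_comm] using dvd_add hf hg
  | mul_X f i hf =>
    simpa only [map_mul] using dvd_mul_sub_mul hf (hX i)

lemma dvd_of_linearPullback_eq_zero (he : Function.Injective e) {α f : MvPolynomial (Fin n) k}
    (hα : α.IsHomogeneous 1) (hrange : ∀ v, eval v α = 0 → v ∈ Set.range e)
    (hf : linearPullback e f = 0) : α ∣ f := by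
  obtain ⟨p, hp⟩ := e.exists_leftInverse_of_injective (LinearMap.ker_eq_bot.2 he)
  simpa only [hf, map_zero, sub_zero] using
    dvd_sub_linearPullback_linearPullback (LinearMap.congr_fun hp) hα hrange f

end LinearPullback

section Restriction

variable {k : Type*} [Field k] {m n : ℕ}

lemma mem_range_of_eval_eq_zero [Infinite k] (hnm : n ≤ m + 1)
    {e : (Fin m → k) →ₗ[k] (Fin n → k)} (he : Function.Injective e)
    {α : MvPolynomial (Fin n) k} (hα : α.IsHomogeneous 1) (hα0 : α ≠ 0)
    (hαe : ∀ w, eval (e w) α = 0) {v : Fin n → k} (hv : eval v α = 0) : v ∈ Set.range e := by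
  obtain ⟨f, hf⟩ := exists_dual_eq_eval hα
  have hf0 : f ≠ 0 := fun h => hα0 (MvPolynomial.funext fun v => by simp [← hf, h])
  have hle : LinearMap.range e ≤ LinearMap.ker f := by
    rintro _ ⟨w, rfl⟩
    rw [LinearMap.mem_ker, hf, hαe]
  have hfinrank : Module.finrank k (LinearMap.ker f) ≤ Module.finrank k (LinearMap.range e) := by
    have hker := Module.Dual.finrank_ker_add_one_of_ne_zero hf0
    rw [Module.finrank_fin_fun] at hker
    rw [LinearMap.finrank_range_of_inj he, Module.finrank_fin_fun]
    omega
  have hvker : v ∈ LinearMap.ker f := by rw [LinearMap.mem_ker, hf, hv]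
  rwa [← Submodule.eq_of_le_of_finrank_le hle hfinrank] at hvker

lemma exists_applyDer_linearPullback_eq [Infinite k]
    {e : (Fin m → k) →ₗ[k] (Fin n → k)} (he : Function.Injective e)
    {α : MvPolynomial (Fin n) k} (hα : α.IsHomogeneous 1) (hαe : ∀ w, eval (e w) α = 0)
    (hrange : ∀ v, eval v α = 0 → v ∈ Set.range e) {θ : Fin n → MvPolynomial (Fin n) k} {d : ℕ}
    (hθ : ∀ j, (θ j).IsHomogeneous d) (hθα : α ∣ applyDer θ α) :
    ∃ η : Fin m → MvPolynomial (Fin m) k, (∀ j, (η j).IsHomogeneous d) ∧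
      ∀ f, applyDer η (linearPullback e f) = linearPullback e (applyDer θ f) := by
  obtain ⟨p, hp⟩ := e.exists_leftInverse_of_injective (LinearMap.ker_eq_bot.2 he)
  have hright := linearPullback_linearPullback (LinearMap.congr_fun hp)
  have hα_pullback : linearPullback e α = 0 :=
    MvPolynomial.funext fun w => by rw [eval_linearPullback, hαe, map_zero]
  have hker (f : MvPolynomial (Fin n) k) (hf : linearPullback e f = 0) :
      linearPullback e (mkDerivation k θ f) = 0 := by
    obtain ⟨g, rfl⟩ := dvd_of_linearPullback_eq_zero he hα hrange hf
    obtain ⟨q, hq⟩ := hθα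
    rw [← applyDer_eq_mkDerivation, applyDer_mul, hq]
    simp only [map_add, map_mul, hα_pullback, zero_mul, mul_zero, add_zero]
  let D := Derivation.liftOfRightInverse hright hker
  refine ⟨fun j => D (X j), fun j => ?_, fun f => ?_⟩
  · change (linearPullback e (mkDerivation k θ (linearPullback p (X j)))).IsHomogeneous d
    rw [← applyDer_eq_mkDerivation]
    exact isHomogeneous_linearPullback e
      (isHomogeneous_applyDer hθ (isHomogeneous_linearPullback p (isHomogeneous_X k j)))
  · rw [applyDer_derivation_X, Derivation.liftOfRightInverse_apply, applyDer_eq_mkDerivation]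

namespace IsRestrictionOf

variable {A : Finset (MvPolynomial (Fin n) k)} {H : MvPolynomial (Fin n) k}
  {B : Finset (MvPolynomial (Fin (n - 1)) k)} {θ : Fin n → MvPolynomial (Fin n) k} {d : ℕ}

lemma nonempty_erase (hB : IsRestrictionOf A H B) (hne : B.Nonempty) : (A.erase H).Nonempty := by
  obtain ⟨-, e, -, -, himage⟩ := hB
  exact Finset.image_nonempty.1 (himage ▸ hne.image _)

lemma exists_linearPullback_mem_logDer [Infinite k] (hB : IsRestrictionOf A H B)
    (hA : IsArrangement A) (hH : H ∈ A) (hθ : ∀ j, (θ j).IsHomogeneous d) (hlog : θ ∈ logDer A) :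
    ∃ (e : (Fin (n - 1) → k) →ₗ[k] (Fin n → k)) (η : Fin (n - 1) → MvPolynomial (Fin (n - 1)) k),
      Function.Injective e ∧ (∀ v, eval v H = 0 → v ∈ Set.range e) ∧
      (∀ j, (η j).IsHomogeneous d) ∧ η ∈ logDer B ∧
      ∀ f, applyDer η (linearPullback e f) = linearPullback e (applyDer θ f) := by
  obtain ⟨hBarr, e, he, heH, himage⟩ := hB
  obtain ⟨hH0, hH1⟩ := hA.1 H hH
  have hrange (v : Fin n → k) (hv : eval v H = 0) : v ∈ Set.range e :=
    mem_range_of_eval_eq_zero (by omega) he hH1 hH0 heH hv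
  obtain ⟨η, hη, hηθ⟩ := exists_applyDer_linearPullback_eq he hH1 heH hrange hθ (hlog H hH)
  refine ⟨e, η, he, hrange, hη, fun β hβ => ?_, hηθ⟩
  obtain ⟨L, hL, hLβ⟩ := Finset.mem_image.1 (himage ▸ Finset.mem_image_of_mem _ hβ)
  have hLA := Finset.mem_of_mem_erase hL
  obtain ⟨c, rfl⟩ : ∃ c : k, β = c • linearPullback e L :=
    exists_eq_smul_of_eval_eq_zero_imp (isHomogeneous_linearPullback e (hA.1 L hLA).2)
      (hBarr.1 β hβ).2 fun w hw => by
        rw [eval_linearPullback] at hw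
        exact (Set.ext_iff.1 hLβ w).1 hw
  obtain ⟨q, hq⟩ := hlog L hLA
  rw [applyDer_const_smul, hηθ, hq, map_mul, ← smul_mul_assoc]
  exact dvd_mul_right _ _

variable [CharZero k]

lemma exists_eq_smul_eulerDer_add_smul (hB : IsRestrictionOf A H B) (hA : IsArrangement A)
    (hH : H ∈ A) (hθ : ∀ j, (θ j).IsHomogeneous d) (hlog : θ ∈ logDer A) (hd : d < mdr B) :
    ∃ (g : MvPolynomial (Fin n) k) (φ : Fin n → MvPolynomial (Fin n) k),
      θ = g • eulerDer k n + H • φ := by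
  obtain ⟨e, η, he, hrange, hη, hηB, hηθ⟩ := hB.exists_linearPullback_mem_logDer hA hH hθ hlog
  obtain ⟨g', hg'⟩ := hB.1.exists_eq_smul_eulerDer_of_lt_mdr hd hη hηB
  obtain ⟨p, hp⟩ := e.exists_leftInverse_of_injective (LinearMap.ker_eq_bot.2 he)
  obtain ⟨g, rfl⟩ : ∃ g, linearPullback e g = g' :=
    ⟨_, linearPullback_linearPullback (LinearMap.congr_fun hp) g'⟩
  have hdvd (j : Fin n) : H ∣ θ j - g * X j := by
    refine dvd_of_linearPullback_eq_zero he (hA.1 H hH).2 hrange ?_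
    have hX := hηθ (X j)
    rw [hg', applyDer_smul_left, applyDer_X,
      applyDer_eulerDer (isHomogeneous_linearPullback e (isHomogeneous_X k j)), one_smul] at hX
    rw [map_sub, map_mul, hX, sub_self]
  choose φ hφ using hdvd
  exact ⟨g, φ, funext fun j => sub_eq_iff_eq_add'.1 (hφ j)⟩

lemma mdr_erase_lt_mdr (hB : IsRestrictionOf A H B) (hA : IsArrangement A) (hH : H ∈ A)
    (hn : 2 ≤ n) (h : mdr (A.erase H) < mdr B) : mdr (A.erase H) < mdr A := by
  by_contra! hle
  obtain ⟨θ, hθ0, hθ, hQ⟩ := hA.exists_applyDer_Qpoly_eq_zero_of_mdr hn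
  have hlog := hA.mem_logDer_of_applyDer_Qpoly_eq_zero hQ
  obtain ⟨g₀, φ₀, h₀⟩ := hB.exists_eq_smul_eulerDer_add_smul hA hH hθ hlog (hle.trans_lt h)
  obtain ⟨e, g, φ, he, hφ, hθφ⟩ :=
    exists_isHomogeneous_eq_smul_eulerDer_add_smul (hA.1 H hH).2 hθ0 hθ h₀
  have hA' := hA.erase H
  have hφlog : φ ∈ logDer (A.erase H) := hA.mem_logDer_erase_of_smul_mem hH <| by
    rw [← sub_eq_iff_eq_add'.2 hθφ]
    exact sub_mem (logDer_anti (A.erase_subset H) hlog)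
      (Submodule.smul_mem _ g hA'.eulerDer_mem_logDer)
  obtain ⟨q, rfl⟩ := hA'.exists_eq_smul_eulerDer_of_lt_mdr (by omega) hφ hφlog
  rw [smul_smul, ← add_smul] at hθφ
  exact hθ0 (hA.eq_zero_of_eq_smul_eulerDer ⟨H, hH⟩ hQ hθφ)

end IsRestrictionOf

end Restriction

theorem mdr_addition_deletion_general (A : Finset (MvPolynomial (Fin ℓ) K))
    (hA : IsArrangement A) (H : MvPolynomial (Fin ℓ) K) (hH : H ∈ A)
    (B : Finset (MvPolynomial (Fin (ℓ - 1)) K)) (hB : IsRestrictionOf A H B)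
    (h : mdr (A.erase H) < mdr B) :
    mdr A = mdr (A.erase H) + 1 := by
  have hB_pos : 0 < mdr B := Nat.zero_lt_of_lt h
  have hl : 2 ≤ ℓ := by
    have hl_pos := pos_of_mdr_pos hB_pos
    omega
  exact le_antisymm
    (hA.mdr_le_mdr_erase_add_one hl hH (hB.nonempty_erase (nonempty_of_mdr_pos hB_pos)))
    (Nat.succ_le_of_lt (hB.mdr_erase_lt_mdr hA hH hl h))

/-- Addition-deletion theorem for `r(A)`: Let `ℓ ≥ 2`, let `A` be an
essential hyperplane arrangement in `K^ℓ`, let `H ∈ A`, and suppose `A' = A \ {H}` is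
also essential and nonempty. Let `r = r(A)`, `r' = r(A')` and `r'' = r(A^H)`, where
`A^H` is the restricted arrangement in `H ≅ K^{ℓ-1}`. If `r' < r''`, then `r = r' + 1`. -/
theorem mdr_addition_deletion (hl : 2 ≤ ℓ) (A : Finset (MvPolynomial (Fin ℓ) K))
    (hA : IsArrangement A) (hAess : IsEssential A)
    (H : MvPolynomial (Fin ℓ) K) (hH : H ∈ A)
    (hA'ess : IsEssential (A.erase H)) (hA'ne : (A.erase H).Nonempty)
    (B : Finset (MvPolynomial (Fin (ℓ - 1)) K)) (hB : IsRestrictionOf A H B)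
    (h : mdr (A.erase H) < mdr B) :
    mdr A = mdr (A.erase H) + 1 :=
  mdr_addition_deletion_general A hA H hH B hB h
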